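/- Let F = GaloisField 2 7 and f : F → F the Gold APN function f(x) = x³. Then dA(f) = 117 = 2⁷ − 11; that is, every affine map A : F → F satisfies |{x ∈ F : f(x) ≠ A(x)}| ≥ 117, and there exists an affine map A : F → F with |{x ∈ F : f(x) ≠ A(x)}| = 117. -/

import Mathlib

/-!
The solutions of `x ^ 3 = L x + c` form a Sidon set: on them `x₁ + x₂ = x₃ + x₄` forces
`x₁ ^ 3 + x₂ ^ 3 = x₃ ^ 3 + x₄ ^ 3`, and then `(x₁ + x₂) * (x₁ - x₃) * (x₂ - x₃) = 0`. Suppose there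
are twelve of them. The `𝔽₂`-linear relations between the vectors `(1, x)` of the eight-dimensional
space `𝔽₂ × F` form a binary code of length `12`, dimension at least `4` and minimum weight at
least `6`. By Plotkin's averaging argument the coordinates of a four-dimensional subcode are twelve
distinct nonzero functionals. The three nonzero functionals left out add up to zero, so together
with `0` they form a plane `U`, and the twelve functionals are the points off `U`. Splitting off a
complement of `U` arranges the solutions in a `4 × 3` array whose columns have equal sums and whose
first three rows have equal sums. The cubes, being an affine function of the solutions, have the
same property.

Affine changes of variable preserve such arrays, and bring the first entries of the first two rows
to `0` and `1`. The ratio `t = (P 0 1 + P 1 1) / (P 0 0 + P 1 0)` is invariant under them, while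
permutations of the columns and the Frobenius automorphism move it by `t ↦ 1 + t`, `t ↦ t⁻¹` and
`t ↦ t ^ 2`. These maps have only three orbits on `F ∖ {0, 1}`, and an exhaustive search excludes
one ratio from each. So a cube and an affine function agree in at most eleven points, and an
explicit linearized polynomial attains eleven.
-/

/-- The distance of `f : V → W` to the set of affine maps:
the minimum Hamming distance `|{x | f x ≠ A x}|` over affine maps `A x = L x + c`. -/
noncomputable def dA {V W : Type*} [AddCommGroup V] [AddCommGroup W]
    [Module (ZMod 2) V] [Module (ZMod 2) W] (f : V → W) : ℕ :=
  sInf { d : ℕ | ∃ (L : V →ₗ[ZMod 2] W) (c : W), d = {x | f x ≠ L x + c}.ncard }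

open Finset Module

namespace GoldCube

/-! ### Binary codes of length twelve and Sidon sets -/

section Dual

variable {E ι : Type*} [AddCommGroup E] [Module (ZMod 2) E]

theorem add_eq_zero_iff_eq {a b : E} : a + b = 0 ↔ a = b := by
  rw [add_eq_zero_iff_eq_neg, ZModModule.neg_eq_self]

theorem exists_submodule_coe_eq_of_card_eq_four {T : Finset E} (hT : #T = 4)
    (zero_mem : 0 ∈ T) (hsum : ∑ v ∈ T, v = 0) :
    ∃ U : Submodule (ZMod 2) E, (U : Set E) = T := by
  classical
  obtain ⟨a, b, c, hab, hac, hbc, h⟩ : ∃ a b c, a ≠ b ∧ a ≠ c ∧ b ≠ c ∧ T.erase 0 = {a, b, c} := by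
    rw [← card_eq_three, card_erase_of_mem zero_mem, hT]
  rw [← add_sum_erase T _ zero_mem, h, sum_insert (by simp [hab, hac]), sum_pair hbc, zero_add,
    ← add_assoc, add_eq_zero_iff_neg_eq, ZModModule.neg_eq_self] at hsum
  have exists_zmod_two (p : ZMod 2 → Prop) : (∃ s, p s) ↔ p 0 ∨ p 1 := Fin.exists_fin_two
  refine ⟨Submodule.span (ZMod 2) {a, b}, Set.ext fun v => ?_⟩
  rw [SetLike.mem_coe, Submodule.mem_span_pair, ← insert_erase zero_mem, h, ← hsum]
  simp only [exists_zmod_two]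
  simp [eq_comm, or_assoc, or_left_comm]

theorem zmod_two_ne_zero_iff (a : ZMod 2) : a ≠ 0 ↔ a = 1 := by decide +revert

variable [Fintype ι]

theorem sum_eq_card_ne_zero (f : ι → ZMod 2) : ∑ i, f i = #{i | f i ≠ 0} := by
  rw [← sum_boole]
  exact sum_congr rfl fun i _ => by generalize f i = a; decide +revert

theorem even_card_of_sum_eq_zero {w : ι → ZMod 2} (hw : ∑ i, w i = 0) : Even #{i | w i ≠ 0} := by
  rwa [sum_eq_card_ne_zero, ZMod.natCast_eq_zero_iff_even] at hw

theorem sum_smul_eq_sum_filter (w : ι → ZMod 2) (x : ι → E) :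
    ∑ i, w i • x i = ∑ i with w i ≠ 0, x i := by
  rw [sum_filter]
  refine sum_congr rfl fun i _ => ?_
  split_ifs with h
  · rw [(zmod_two_ne_zero_iff _).1 h, one_smul]
  · rw [not_not.1 h, zero_smul]

theorem sum_eq_zero_of_even {γ : ι → Dual (ZMod 2) E} (hγ : ∀ v, Even #{i | γ i v ≠ 0}) :
    ∑ i, γ i = 0 := by
  ext v
  rw [LinearMap.sum_apply, sum_eq_card_ne_zero, (hγ v).natCast_zmod_two, LinearMap.zero_apply]

section Fintype

variable [Fintype E]

theorem card_eq_two_pow_iff_finrank_eq {n : ℕ} :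
    Fintype.card E = 2 ^ n ↔ finrank (ZMod 2) E = n := by
  rw [card_eq_pow_finrank (K := ZMod 2) (V := E), ZMod.card]
  exact Nat.pow_right_inj one_lt_two

theorem two_mul_card_filter_ne_zero {φ : Dual (ZMod 2) E} (hφ : φ ≠ 0) :
    2 * #{v | φ v ≠ 0} = Fintype.card E := by
  obtain ⟨v, hv⟩ := LinearMap.surjective hφ 1
  have card_fiber : #{v | φ v = 0} = #{v | φ v = 1} :=
    AddMonoidHom.card_fiber_eq_of_mem_range φ ⟨0, map_zero φ⟩ ⟨v, hv⟩
  have card_split := card_filter_add_card_filter_not (s := univ) (φ · = 0)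
  simp only [card_fiber, ← ne_eq, zmod_two_ne_zero_iff] at card_split ⊢
  rw [two_mul, card_split, card_univ]

theorem plotkin_bound (γ : ι → Dual (ZMod 2) E) {d : ℕ}
    (hd : ∀ v ≠ 0, d ≤ #{i | γ i v ≠ 0}) [DecidablePred fun i => γ i ≠ 0] :
    2 * d * (Fintype.card E - 1) ≤ #{i | γ i ≠ 0} * Fintype.card E := by
  classical
  calc 2 * d * (Fintype.card E - 1) = 2 * ∑ v : E with v ≠ 0, d := by
        rw [sum_const, filter_ne', card_erase_of_mem (mem_univ 0), card_univ, smul_eq_mul]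
        ring
    _ ≤ 2 * ∑ v : E, #{i | γ i v ≠ 0} := by
        gcongr
        exact (sum_le_sum fun v hv => hd v (by simpa using hv)).trans
          (sum_le_sum_of_subset (filter_subset _ _))
    _ = 2 * ∑ i, #{v | γ i v ≠ 0} := by
        simp only [card_filter]
        rw [sum_comm]
    _ = ∑ i, if γ i ≠ 0 then Fintype.card E else 0 := by
        rw [mul_sum]
        refine sum_congr rfl fun i _ => ?_
        split_ifs with h
        · exact two_mul_card_filter_ne_zero h
        · simp_all
    _ = #{i | γ i ≠ 0} * Fintype.card E := by
        rw [← sum_filter, sum_const, smul_eq_mul]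

theorem sum_univ_eq_zero (hE : 1 < finrank (ZMod 2) E) : ∑ v : E, v = 0 := by
  rw [← forall_dual_apply_eq_zero_iff (ZMod 2)]
  intro φ
  obtain rfl | hφ := eq_or_ne φ 0
  · simp
  have even_card : Even #{v | φ v ≠ 0} := by
    obtain ⟨n, hn⟩ := Nat.exists_eq_add_of_lt hE
    have := two_mul_card_filter_ne_zero hφ
    rw [card_eq_pow_finrank (K := ZMod 2), ZMod.card, hn] at this
    exact ⟨2 ^ n, by grind⟩
  rw [map_sum, sum_eq_card_ne_zero, even_card.natCast_zmod_two]

end Fintype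

theorem finite_of_finrank_pos (hE : 0 < finrank (ZMod 2) E) : Finite E :=
  have := Module.finite_of_finrank_pos hE
  finite_of_finite (ZMod 2)

theorem ne_zero_and_injective_of_min_weight (hE : finrank (ZMod 2) E = 4) (hι : Fintype.card ι = 12)
    {γ : ι → Dual (ZMod 2) E} (hγ : ∀ v ≠ 0, 6 ≤ #{i | γ i v ≠ 0}) :
    (∀ i, γ i ≠ 0) ∧ Function.Injective γ := by
  classical
  have := finite_of_finrank_pos (E := E) (by lia)
  have := Fintype.ofFinite E
  rw [← card_eq_two_pow_iff_finrank_eq] at hE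
  have ne_zero : ∀ i, γ i ≠ 0 := by
    have bound := plotkin_bound γ hγ
    have card_le := card_filter_le univ (γ · ≠ 0)
    rw [card_univ, hι] at card_le
    have card_eq : #{i | γ i ≠ 0} = #(univ : Finset ι) := by
      rw [card_univ]
      lia
    simpa using card_filter_eq_iff.1 card_eq
  refine ⟨ne_zero, fun i j hij => ?_⟩
  by_contra hne
  let γ' (k : ι) : Dual (ZMod 2) (LinearMap.ker (γ i)) := (γ k).domRestrict _
  have card_ker : Fintype.card (LinearMap.ker (γ i)) = 8 := by
    have card_split := card_filter_add_card_filter_not (s := univ) (γ i · = 0)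
    have card_ne := two_mul_card_filter_ne_zero (ne_zero i)
    rw [card_univ] at card_split
    simp only [LinearMap.mem_ker, Fintype.card_subtype]
    lia
  have bound := plotkin_bound γ' fun v hv => hγ v (by simpa using hv)
  have card_le : #{k | γ' k ≠ 0} ≤ 10 := by
    calc _ ≤ #(univ \ {i, j}) := by
          refine card_le_card fun k hk => ?_
          simp only [mem_sdiff, mem_univ, true_and, mem_insert, mem_singleton]
          rintro (rfl | rfl) <;>
          · simp only [mem_filter, mem_univ, true_and] at hk
            exact hk (LinearMap.ext fun v => by simp [γ', ← hij])
      _ = 10 := by rw [card_univ_sdiff, hι, card_pair hne]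
  rw [card_ker] at bound
  lia

theorem exists_linearEquiv_prod_mem_range (hE : finrank (ZMod 2) E = 4)
    (hι : Fintype.card ι = 12) {γ : ι → E} (hinj : Function.Injective γ) (ne_zero : ∀ i, γ i ≠ 0)
    (hsum : ∑ i, γ i = 0) :
    ∃ e : E ≃ₗ[ZMod 2] (ZMod 2 × ZMod 2) × (ZMod 2 × ZMod 2),
      ∀ d, (e d).2 ≠ 0 → d ∈ Set.range γ := by
  classical
  have := finite_of_finrank_pos (E := E) (by lia)
  have := Fintype.ofFinite E
  have card_E : Fintype.card E = 2 ^ 4 := card_eq_two_pow_iff_finrank_eq.2 hE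
  have card_T : #(univ.image γ)ᶜ = 4 := by
    rw [card_compl, card_image_of_injective _ hinj, card_univ, hι, card_E]
    norm_num
  obtain ⟨U, hU⟩ : ∃ U : Submodule (ZMod 2) E, (U : Set E) = ((univ.image γ)ᶜ : Finset E) := by
    refine exists_submodule_coe_eq_of_card_eq_four card_T (by simpa using ne_zero) ?_
    have sum_split := sum_add_sum_compl (univ.image γ) fun d => d
    rwa [sum_image hinj.injOn, hsum, zero_add, sum_univ_eq_zero (by lia)] at sum_split
  have mem_U (d : E) : d ∈ U ↔ d ∉ Set.range γ := by
    rw [← SetLike.mem_coe, hU]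
    simp
  have finrank_U : finrank (ZMod 2) U = 2 := by
    rw [← card_eq_two_pow_iff_finrank_eq, ← Nat.card_eq_fintype_card,
      ← SetLike.coe_sort_coe, hU, Nat.card_coe_set_eq, Set.ncard_coe_finset, card_T]
    norm_num
  obtain ⟨C, hUC⟩ := U.exists_isCompl
  have finrank_C : finrank (ZMod 2) C = 2 := by
    have := Submodule.finrank_add_eq_of_isCompl hUC
    lia
  let eU : U ≃ₗ[ZMod 2] ZMod 2 × ZMod 2 := LinearEquiv.ofFinrankEq _ _ (by simp [finrank_U])
  let eC : C ≃ₗ[ZMod 2] ZMod 2 × ZMod 2 := LinearEquiv.ofFinrankEq _ _ (by simp [finrank_C])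
  refine ⟨(U.prodEquivOfIsCompl C hUC).symm ≪≫ₗ eU.prodCongr eC, fun d hd => ?_⟩
  contrapose! hd
  rw [← mem_U] at hd
  simpa using hd

end Dual

section Balanced

variable {G : Type*}

/-- A `4 × 3` array is balanced if its columns have equal sums and its first three rows have equal
sums. The last row is unconstrained: its label in `rowLabel` is zero. -/
structure IsBalanced [AddCommMonoid G] (P : Fin 4 → Fin 3 → G) : Prop where
  sum_row : ∀ i j : Fin 3, ∑ k, P i.castSucc k = ∑ k, P j.castSucc k
  sum_col : ∀ i j, ∑ k, P k i = ∑ k, P k j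

/-- Labels of the rows of a `4 × 3` array by the four vectors of `𝔽₂²`. -/
def rowLabel : Fin 4 → ZMod 2 × ZMod 2 := ![(1, 0), (0, 1), (1, 1), (0, 0)]

/-- Labels of the columns of a `4 × 3` array by the three nonzero vectors of `𝔽₂²`. -/
def colLabel : Fin 3 → ZMod 2 × ZMod 2 := ![(1, 0), (0, 1), (1, 1)]

variable [AddCommGroup G] [Module (ZMod 2) G]

theorem isBalanced_of_sum_smul_eq_zero {P : Fin 4 → Fin 3 → G}
    (h : ∀ φ : Dual (ZMod 2) ((ZMod 2 × ZMod 2) × (ZMod 2 × ZMod 2)),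
      ∑ i, ∑ j, φ (rowLabel i, colLabel j) • P i j = 0) :
    IsBalanced P := by
  have row₀₂ := h (LinearMap.fst _ _ _ ∘ₗ LinearMap.fst _ _ _)
  have row₁₂ := h (LinearMap.snd _ _ _ ∘ₗ LinearMap.fst _ _ _)
  have col₀₂ := h (LinearMap.fst _ _ _ ∘ₗ LinearMap.snd _ _ _)
  have col₁₂ := h (LinearMap.snd _ _ _ ∘ₗ LinearMap.snd _ _ _)
  rw [sum_comm] at col₀₂ col₁₂
  simp only [LinearMap.comp_apply, LinearMap.fst_apply, LinearMap.snd_apply, ← smul_sum] at *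
  simp only [rowLabel, Fin.sum_univ_four, Fin.isValue, Matrix.cons_val, one_smul, zero_smul,
    add_zero, zero_add, add_eq_zero_iff_eq] at row₀₂ row₁₂
  simp only [colLabel, Fin.sum_univ_three, Fin.isValue, Matrix.cons_val, one_smul, zero_smul,
    add_zero, zero_add, add_eq_zero_iff_eq] at col₀₂ col₁₂
  have sum_row_eq (i : Fin 3) : ∑ k, P i.castSucc k = ∑ k, P 2 k := by
    fin_cases i
    exacts [row₀₂, row₁₂, rfl]
  have sum_col_eq (j : Fin 3) : ∑ k, P k j = ∑ k, P k 2 := by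
    fin_cases j
    exacts [col₀₂, col₁₂, rfl]
  exact ⟨fun i j => (sum_row_eq i).trans (sum_row_eq j).symm,
    fun i j => (sum_col_eq i).trans (sum_col_eq j).symm⟩

variable {E ι : Type*} [AddCommGroup E] [Module (ZMod 2) E] [Fintype ι]

theorem exists_equiv_isBalanced_of_min_weight (hE : finrank (ZMod 2) E = 4)
    (hι : Fintype.card ι = 12) {γ : ι → Dual (ZMod 2) E} (hγ : ∀ v ≠ 0, 6 ≤ #{i | γ i v ≠ 0})
    (even_weight : ∀ v, Even #{i | γ i v ≠ 0}) {x : ι → G} (hx : ∀ v, ∑ i, γ i v • x i = 0) :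
    ∃ σ : Fin 4 × Fin 3 ≃ ι, IsBalanced fun i j => x (σ (i, j)) := by
  have := Module.finite_of_finrank_pos (R := ZMod 2) (M := E) (by lia)
  obtain ⟨ne_zero, γ_injective⟩ := ne_zero_and_injective_of_min_weight hE hι hγ
  obtain ⟨e, he⟩ := exists_linearEquiv_prod_mem_range (by rwa [Subspace.dual_finrank_eq]) hι
    γ_injective ne_zero (sum_eq_zero_of_even even_weight)
  have col_ne_zero : ∀ j, colLabel j ≠ 0 := by decide
  have label_injective : Function.Injective (Prod.map rowLabel colLabel) := by decide
  have mem_range (p) : e.symm (Prod.map rowLabel colLabel p) ∈ Set.range γ :=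
    he _ (by simpa using col_ne_zero p.2)
  choose σ hσ using mem_range
  have σ_injective : Function.Injective σ := fun p q hpq =>
    label_injective (e.symm.injective (by rw [← hσ, ← hσ, hpq]))
  have σ_bijective : Function.Bijective σ :=
    (Fintype.bijective_iff_injective_and_card σ).2 ⟨σ_injective, by simp [hι]⟩
  refine ⟨.ofBijective σ σ_bijective, isBalanced_of_sum_smul_eq_zero fun φ => ?_⟩
  obtain ⟨v, hv⟩ := (evalEquiv (ZMod 2) E).surjective (φ ∘ₗ e)
  rw [← Fintype.sum_prod_type', ← hx v, ← σ_bijective.sum_comp]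
  refine sum_congr rfl fun p _ => ?_
  rw [Equiv.ofBijective_apply]
  have eval_v : γ (σ p) v = φ (e (γ (σ p))) := LinearMap.congr_fun hv (γ (σ p))
  rw [eval_v, hσ p, e.apply_symm_apply, Prod.map]

end Balanced

section Sidon

variable {G : Type*}

/-- Sidon sets: a sum of two elements determines the summands. For use in characteristic two,
coincidences within a pair are allowed, as `a + a = 0` for every `a`. -/
def IsSidon [Add G] (S : Set G) : Prop :=
  ∀ ⦃a⦄, a ∈ S → ∀ ⦃b⦄, b ∈ S → ∀ ⦃c⦄, c ∈ S → ∀ ⦃d⦄, d ∈ S →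
    a + b = c + d → a = b ∨ a = c ∨ a = d

variable [AddCommGroup G] [Module (ZMod 2) G] {ι : Type*}

theorem IsSidon.six_le_card {x : ι → G} (hx : IsSidon (Set.range x)) (hinj : Function.Injective x)
    {s : Finset ι} (hs : s.Nonempty) (even_card : Even #s) (hsum : ∑ i ∈ s, x i = 0) : 6 ≤ #s := by
  classical
  by_contra! card_lt
  obtain card_eq | card_eq : #s = 2 ∨ #s = 4 := by
    have := hs.card_pos
    obtain ⟨n, hn⟩ := even_card
    lia
  · obtain ⟨i, j, hij, rfl⟩ := card_eq_two.1 card_eq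
    rw [sum_pair hij, add_eq_zero_iff_eq] at hsum
    exact hij (hinj hsum)
  · obtain ⟨i, t, hit, rfl, card_t⟩ := card_eq_succ.1 card_eq
    obtain ⟨j, k, l, hjk, hjl, hkl, rfl⟩ := card_eq_three.1 card_t
    rw [sum_insert hit, sum_insert (by simp [hjk, hjl]), sum_pair hkl, ← add_assoc,
      add_eq_zero_iff_eq] at hsum
    have := hx ⟨i, rfl⟩ ⟨j, rfl⟩ ⟨k, rfl⟩ ⟨l, rfl⟩ hsum
    simp_all [hinj.eq_iff]

variable [Fintype ι]

/-- The binary code of affine relations between the points of a family: the words `w` of even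
weight with `∑ i, w i • x i = 0`. -/
def relations (x : ι → G) : Submodule (ZMod 2) (ι → ZMod 2) :=
  LinearMap.ker (Fintype.linearCombination (ZMod 2) fun i => ((1 : ZMod 2), x i))

theorem mem_relations {x : ι → G} {w : ι → ZMod 2} :
    w ∈ relations x ↔ ∑ i, w i = 0 ∧ ∑ i, w i • x i = 0 := by
  simp [relations, Fintype.linearCombination_apply, Prod.ext_iff, Prod.fst_sum, Prod.snd_sum]

theorem card_le_finrank_relations [FiniteDimensional (ZMod 2) G] (x : ι → G) :
    Fintype.card ι ≤ finrank (ZMod 2) (relations x) + finrank (ZMod 2) G + 1 := by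
  let f := Fintype.linearCombination (ZMod 2) fun i => ((1 : ZMod 2), x i)
  have rank_nullity := f.finrank_range_add_finrank_ker
  have range_le := f.range.finrank_le
  rw [finrank_prod, finrank_self] at range_le
  rw [finrank_fintype_fun_eq_card] at rank_nullity
  change _ ≤ finrank (ZMod 2) (LinearMap.ker f) + _ + 1
  lia

theorem IsSidon.exists_equiv_isBalanced (hG : finrank (ZMod 2) G = 7)
    (hι : Fintype.card ι = 12) {x : ι → G} (hx : IsSidon (Set.range x))
    (hinj : Function.Injective x) :
    ∃ σ : Fin 4 × Fin 3 ≃ ι, IsBalanced fun i j => x (σ (i, j)) := by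
  have : FiniteDimensional (ZMod 2) G := .of_finrank_pos (by lia)
  have finrank_ge := card_le_finrank_relations x
  obtain ⟨g, hg⟩ := exists_linearIndependent_of_le_finrank
    (show 4 ≤ finrank (ZMod 2) (relations x) by lia)
  let word := Fintype.linearCombination (ZMod 2) g
  let γ (i : ι) : Dual (ZMod 2) (Fin 4 → ZMod 2) :=
    LinearMap.proj i ∘ₗ (relations x).subtype ∘ₗ word
  have sum_γ v : ∑ i, γ i v = 0 := (mem_relations.1 (word v).2).1
  have sum_γ_smul v : ∑ i, γ i v • x i = 0 := (mem_relations.1 (word v).2).2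
  have min_weight (v) (hv : v ≠ 0) : 6 ≤ #{i | γ i v ≠ 0} := by
    refine hx.six_le_card hinj ?_ (even_card_of_sum_eq_zero (sum_γ v)) ?_
    · contrapose! hv
      refine (map_eq_zero_iff word hg.fintypeLinearCombination_injective).1 ?_
      ext i
      exact not_not.1 (filter_eq_empty_iff.1 hv (mem_univ i))
    · rw [← sum_smul_eq_sum_filter, sum_γ_smul]
  exact exists_equiv_isBalanced_of_min_weight (by simp) hι min_weight
    (fun v => even_card_of_sum_eq_zero (sum_γ v)) sum_γ_smul

theorem IsSidon.exists_isBalanced (hG : finrank (ZMod 2) G = 7) {S : Set G} (hS : IsSidon S)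
    (hcard : 12 ≤ S.ncard) :
    ∃ P : Fin 4 → Fin 3 → G, (∀ i j, P i j ∈ S) ∧ Function.Injective2 P ∧ IsBalanced P := by
  obtain ⟨T, hTS, card_T⟩ := Set.exists_subset_card_eq hcard
  have : Finite T := Set.finite_of_ncard_ne_zero (by lia)
  have := Fintype.ofFinite T
  have hT : IsSidon (Set.range ((↑) : T → G)) := by
    rw [Subtype.range_coe]
    exact fun a ha b hb c hc d hd => hS (hTS ha) (hTS hb) (hTS hc) (hTS hd)
  rw [← Nat.card_coe_set_eq, Nat.card_eq_fintype_card] at card_T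
  obtain ⟨σ, hσ⟩ := hT.exists_equiv_isBalanced hG card_T Subtype.val_injective
  exact ⟨_, fun i j => hTS (σ (i, j)).2, fun i i' j j' h => by simpa [Subtype.val_inj] using h, hσ⟩

end Sidon

/-! ### Arrays balanced together with their cubes -/

section Config

namespace IsBalanced

variable {G H : Type*} [AddCommMonoid G] [AddCommMonoid H] {P Q : Fin 4 → Fin 3 → G}

theorem add (hP : IsBalanced P) (hQ : IsBalanced Q) : IsBalanced fun i j => P i j + Q i j where
  sum_row i j := by simp only [sum_add_distrib, hP.sum_row i j, hQ.sum_row i j]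
  sum_col i j := by simp only [sum_add_distrib, hP.sum_col i j, hQ.sum_col i j]

theorem const (c : G) : IsBalanced fun _ _ => c := ⟨fun _ _ => rfl, fun _ _ => rfl⟩

theorem map (hP : IsBalanced P) (f : G →+ H) : IsBalanced fun i j => f (P i j) where
  sum_row i j := by simp only [← map_sum, hP.sum_row i j]
  sum_col i j := by simp only [← map_sum, hP.sum_col i j]

theorem perm (hP : IsBalanced P) (σ : Equiv.Perm (Fin 3)) : IsBalanced fun i j => P i (σ j) where
  sum_row i j := by simp only [Equiv.sum_comp σ, hP.sum_row i j]
  sum_col i j := hP.sum_col _ _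

end IsBalanced

variable {F K : Type*} [Field F] [Field K]

/-- The arrays ruled out by the proof: those with distinct entries which are balanced and whose
entrywise cubes are balanced as well. -/
structure IsCubeBalanced (P : Fin 4 → Fin 3 → F) : Prop where
  injective : Function.Injective2 P
  balanced : IsBalanced P
  balanced_cube : IsBalanced fun i j => P i j ^ 3

namespace IsCubeBalanced

variable {P : Fin 4 → Fin 3 → F}

theorem map (hP : IsCubeBalanced P) (f : F →+* K) : IsCubeBalanced fun i j => f (P i j) where
  injective _ _ _ _ h := hP.injective (f.injective h)
  balanced := hP.balanced.map f.toAddMonoidHom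
  balanced_cube := by
    simp only [← map_pow]
    exact hP.balanced_cube.map f.toAddMonoidHom

theorem perm (hP : IsCubeBalanced P) (σ : Equiv.Perm (Fin 3)) :
    IsCubeBalanced fun i j => P i (σ j) where
  injective _ _ _ _ h := (hP.injective h).imp_right (σ.injective ·)
  balanced := hP.balanced.perm σ
  balanced_cube := hP.balanced_cube.perm σ

theorem affine [CharP F 2] (hP : IsCubeBalanced P) {u : F} (hu : u ≠ 0) (v : F) :
    IsCubeBalanced fun i j => u * P i j + v where
  injective _ _ _ _ h := hP.injective (mul_left_cancel₀ hu (add_right_cancel h))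
  balanced := (hP.balanced.map (AddMonoidHom.mulLeft u)).add (.const v)
  balanced_cube := by
    have expand (x : F) :
        (u * x + v) ^ 3 = u ^ 3 * x ^ 3 + (u ^ 2 * v * x ^ 2 + u * v ^ 2 * x) + v ^ 3 := by
      linear_combination (u ^ 2 * x ^ 2 * v + u * x * v ^ 2) * CharTwo.two_eq_zero (R := F)
    have balanced_sq := hP.balanced.map (frobenius F 2).toAddMonoidHom
    simp only [expand]
    exact ((hP.balanced_cube.map (AddMonoidHom.mulLeft (u ^ 3))).add
      ((balanced_sq.map (AddMonoidHom.mulLeft (u ^ 2 * v))).add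
        (hP.balanced.map (AddMonoidHom.mulLeft (u * v ^ 2))))).add (.const _)

theorem add_ne_zero [CharP F 2] (hP : IsCubeBalanced P) {i i' : Fin 4} (hi : i ≠ i')
    (j : Fin 3) : P i j + P i' j ≠ 0 :=
  fun h => hi (hP.injective (CharTwo.add_eq_zero.1 h)).1

end IsCubeBalanced

/-- `t` is the ratio `(P 0 1 + P 1 1) / (P 0 0 + P 1 0)` of an array as in `IsCubeBalanced`. Affine
changes of variable leave this ratio invariant. -/
def HasRatio (t : F) : Prop :=
  ∃ P : Fin 4 → Fin 3 → F, IsCubeBalanced P ∧ P 0 1 + P 1 1 = t * (P 0 0 + P 1 0)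

theorem IsCubeBalanced.hasRatio [CharP F 2] {P : Fin 4 → Fin 3 → F} (hP : IsCubeBalanced P) :
    HasRatio ((P 0 1 + P 1 1) / (P 0 0 + P 1 0)) :=
  ⟨P, hP, (div_mul_cancel₀ _ (hP.add_ne_zero (by decide) 0)).symm⟩

namespace HasRatio

variable {t : F}

theorem map (h : HasRatio t) (f : F →+* K) : HasRatio (f t) := by
  obtain ⟨P, hP, hPt⟩ := h
  exact ⟨_, hP.map f, by simp only [← map_add, hPt, map_mul]⟩

theorem inv (h : HasRatio t) (ht : t ≠ 0) : HasRatio t⁻¹ := by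
  obtain ⟨P, hP, hPt⟩ := h
  exact ⟨_, hP.perm (Equiv.swap 0 1), (eq_inv_mul_iff_mul_eq₀ ht).2 hPt.symm⟩

variable [CharP F 2]

theorem one_add (h : HasRatio t) : HasRatio (1 + t) := by
  obtain ⟨P, hP, hPt⟩ := h
  refine ⟨_, hP.perm (Equiv.swap 1 2), ?_⟩
  have row_sum := hP.balanced.sum_row 0 1
  simp only [Fin.sum_univ_three] at row_sum
  change P 0 0 + P 0 1 + P 0 2 = P 1 0 + P 1 1 + P 1 2 at row_sum
  change P 0 2 + P 1 2 = (1 + t) * (P 0 0 + P 1 0)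
  linear_combination row_sum + hPt +
    (P 1 2 - P 0 0 - P 0 1) * CharTwo.two_eq_zero (R := F)

theorem exists_normalized (h : HasRatio t) : ∃ P : Fin 4 → Fin 3 → F,
    IsCubeBalanced P ∧ P 0 0 = 0 ∧ P 1 0 = 1 ∧ P 1 1 = P 0 1 + t := by
  obtain ⟨P, hP, hPt⟩ := h
  set u := P 0 0 + P 1 0 with hu
  have u_ne_zero : u ≠ 0 := hP.add_ne_zero (by decide) 0
  refine ⟨_, hP.affine (inv_ne_zero u_ne_zero) (u⁻¹ * P 0 0), ?_, ?_, ?_⟩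
  · exact CharTwo.add_self_eq_zero _
  · rw [← mul_add, add_comm, ← hu, inv_mul_cancel₀ u_ne_zero]
  · field_simp
    linear_combination hPt - P 0 1 * CharTwo.two_eq_zero (R := F)

theorem ne_zero (h : HasRatio t) : t ≠ 0 := by
  rintro rfl
  obtain ⟨P, hP, hPt⟩ := h
  rw [zero_mul] at hPt
  exact hP.add_ne_zero (by decide) 1 hPt

theorem ne_one (h : HasRatio t) : t ≠ 1 := by
  rintro rfl
  exact h.one_add.ne_zero (CharTwo.add_self_eq_zero 1)

end HasRatio

theorem IsBalanced.pair_sums [CharP F 2] {P : Fin 4 → Fin 3 → F} (hP : IsBalanced P) :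
    P 1 2 + P 0 2 = P 0 0 + P 1 0 + (P 0 1 + P 1 1) ∧
      P 2 2 + P 2 1 = P 0 0 + P 0 1 + P 0 2 + P 2 0 ∧
      P 3 1 + P 3 0 = P 1 2 + P 0 2 + P 2 0 + P 2 1 ∧
      P 3 2 + (P 1 2 + P 0 2 + P 2 2) = P 0 0 + P 1 0 + P 2 0 + P 3 0 := by
  have row₀₁ := hP.sum_row 0 1
  have row₀₂ := hP.sum_row 0 2
  have col₀₁ := hP.sum_col 0 1
  have col₀₂ := hP.sum_col 0 2
  simp only [Fin.sum_univ_three, Fin.sum_univ_four, Fin.castSucc_zero, Fin.castSucc_one,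
    Fin.reduceCastSucc] at row₀₁ row₀₂ col₀₁ col₀₂
  grind

end Config

/-! ### Agreement of the cube with an affine map -/

section Agreement

variable {F K : Type*} [Field F] [Field K]

theorem isSidon_setOf_cube_eq [CharP F 2] (L : F →+ F) (c : F) :
    IsSidon {x | x ^ 3 = L x + c} := by
  intro x₁ h₁ x₂ h₂ x₃ h₃ x₄ h₄ hsum
  have map_sum : L x₁ + L x₂ = L x₃ + L x₄ := by rw [← map_add, hsum, map_add]
  have cube_sum : x₁ ^ 3 + x₂ ^ 3 = x₃ ^ 3 + x₄ ^ 3 := by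
    rw [h₁, h₂, h₃, h₄]
    linear_combination map_sum
  obtain rfl : x₄ = x₁ + x₂ - x₃ := by linear_combination -hsum
  have factored : (x₁ + x₂) * (x₁ - x₃) * (x₂ - x₃) = 0 := by
    linear_combination
      -cube_sum - (x₁ + x₂) * (x₁ - x₃) * (x₂ - x₃) * CharTwo.two_eq_zero (R := F)
  rw [mul_eq_zero, mul_eq_zero, CharTwo.add_eq_zero, sub_eq_zero, sub_eq_zero] at factored
  obtain (h | h) | h := factored
  · exact .inl h
  · exact .inr (.inl h)
  · exact .inr (.inr (by rw [h, add_sub_cancel_right]))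

theorem exists_isCubeBalanced [Algebra (ZMod 2) F] (hF : finrank (ZMod 2) F = 7) {L : F →+ F}
    {c : F} (hcard : 12 ≤ {x | x ^ 3 = L x + c}.ncard) :
    ∃ P : Fin 4 → Fin 3 → F, IsCubeBalanced P := by
  have := charP_of_injective_algebraMap (algebraMap (ZMod 2) F).injective 2
  obtain ⟨P, mem, inj, hP⟩ := (isSidon_setOf_cube_eq L c).exists_isBalanced hF hcard
  refine ⟨P, inj, hP, ?_⟩
  simp only [Set.mem_ofPred_eq] at mem
  simpa only [mem] using (hP.map L).add (.const c)

theorem ncard_setOf_pow_eq_conj (e : F ≃+* K) (L : F →+ F) (c : F) (n : ℕ) :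
    {y | y ^ n = (e : F →+ K).comp (L.comp (e.symm : K →+ F)) y + e c}.ncard =
      {x | x ^ n = L x + c}.ncard := by
  rw [← Set.ncard_image_of_injective _ e.injective]
  congr 1
  ext y
  obtain ⟨x, rfl⟩ := e.surjective y
  rw [e.injective.mem_set_image]
  simp [← map_pow, ← map_add]

end Agreement

/-! ### The exhaustive search -/

/-- A model of the field with `128` elements in which the kernel can compute: the bits are the
coordinates with respect to the powers of a root of `X ^ 7 + X + 1`. -/
def GF128 : Type := BitVec 7

namespace GF128

instance : DecidableEq GF128 := inferInstanceAs (DecidableEq (BitVec 7))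
instance : Fintype GF128 := inferInstanceAs (Fintype (BitVec 7))

theorem card_eq : Fintype.card GF128 = 128 := by decide +kernel

/-- Multiplication by the class of `X` in `𝔽₂[X] ⧸ (X ^ 7 + X + 1)`. -/
def mulX (a : BitVec 7) : BitVec 7 := a <<< 1 ^^^ if a.msb then 3#7 else 0#7

/-- Multiplication in `𝔽₂[X] ⧸ (X ^ 7 + X + 1)`, by Horner's scheme in the second factor. -/
def mul (a b : BitVec 7) : BitVec 7 :=
  (List.range 7).foldr (fun i c => mulX c ^^^ if b.getLsbD i then a else 0#7) 0#7

theorem mulX_xor (a b : BitVec 7) : mulX (a ^^^ b) = mulX a ^^^ mulX b := by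
  have shift_xor : (a ^^^ b) <<< 1 = a <<< 1 ^^^ b <<< 1 := BitVec.shiftLeft_xor_distrib a b 1
  simp only [mulX, shift_xor, BitVec.msb_xor]
  grind

theorem xor_mul (a b c : BitVec 7) : mul (a ^^^ b) c = mul a c ^^^ mul b c := by
  unfold mul
  induction List.range 7 with
  | nil => simp
  | cons i l ih =>
    rw [List.foldr_cons, ih, mulX_xor]
    split_ifs <;> grind

theorem map_mul_left {f : BitVec 7 → BitVec 7} (map_xor : ∀ a b, f (a ^^^ b) = f a ^^^ f b)
    (map_mulX : ∀ a, f (mulX a) = mulX (f a)) (a b : BitVec 7) : f (mul a b) = mul (f a) b := by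
  have map_zero : f 0#7 = 0#7 := by simpa using map_xor 0#7 0#7
  unfold mul
  induction List.range 7 with
  | nil => exact map_zero
  | cons i l ih =>
    rw [List.foldr_cons, List.foldr_cons, map_xor, map_mulX, ih, apply_ite f, map_zero]

protected theorem mul_right_comm (a b c : BitVec 7) : mul (mul a b) c = mul (mul a c) b := by
  have mul_mulX (d : BitVec 7) : mul (mulX d) c = mulX (mul d c) :=
    (map_mul_left mulX_xor (fun _ => rfl) d c).symm
  exact map_mul_left (f := fun d => mul d c) (fun d e => xor_mul d e c) mul_mulX a b

protected theorem one_mul : ∀ a, mul 1#7 a = a := by decide +kernel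

protected theorem mul_comm (a b : BitVec 7) : mul a b = mul b a := by
  simpa only [GF128.one_mul] using GF128.mul_right_comm 1#7 a b

protected theorem mul_assoc (a b c : BitVec 7) : mul (mul a b) c = mul a (mul b c) := by
  rw [GF128.mul_comm a b, GF128.mul_right_comm, GF128.mul_comm]

theorem mul_xor (a b c : BitVec 7) : mul a (b ^^^ c) = mul a b ^^^ mul a c := by
  rw [GF128.mul_comm, xor_mul, GF128.mul_comm b, GF128.mul_comm c]

instance : Zero GF128 := ⟨0#7⟩
instance : One GF128 := ⟨1#7⟩
instance : Add GF128 := ⟨BitVec.xor⟩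
instance : Neg GF128 := ⟨id⟩
instance : Mul GF128 := ⟨mul⟩
-- `a⁻¹ = a ^ 126`, where `126 = 2 * 63` and `63` has six binary digits `1`.
instance : Inv GF128 := ⟨fun a => let b := (fun c => c * c * a)^[6] 1; b * b⟩

protected theorem mul_inv_cancel : ∀ a : GF128, a ≠ 0 → a * a⁻¹ = 1 := by decide +kernel

instance : Field GF128 :=
  .ofMinimalAxioms GF128 BitVec.xor_assoc (fun _ => BitVec.zero_xor) (fun _ => BitVec.xor_self)
    GF128.mul_assoc GF128.mul_comm GF128.one_mul GF128.mul_inv_cancel (by decide +kernel) mul_xor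
    ⟨0, 1, by decide⟩

instance : CharP GF128 2 := CharTwo.of_one_ne_zero_of_two_eq_zero one_ne_zero (by decide)

/-- The natural number with the same bits. -/
def toCode (a : GF128) : ℕ := BitVec.toNat a

/-- The element with given code, codes being read modulo `128`. -/
def ofCode (n : ℕ) : GF128 := BitVec.ofNat 7 n

theorem toCode_add (a b : GF128) : toCode (a + b) = toCode a ^^^ toCode b := BitVec.toNat_xor ..

theorem toCode_one : toCode 1 = 1 := by decide

/-- The codes of the elements other than `0` and `1`. -/
def interior : List ℕ := List.range' 2 126

theorem toCode_mem_interior : ∀ a : GF128, a ≠ 0 → a ≠ 1 → toCode a ∈ interior := by decide +kernel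

/-- The `n`-th entry of a table of seven-bit numbers packed into one natural number. -/
def entry (T n : ℕ) : ℕ := (T >>> (7 * n)) % 128

/-- The packed table of the codes of all cubes. -/
def cubeTable : ℕ :=
  ((List.range 128).map fun n => toCode (ofCode n ^ 3) <<< (7 * n)).sum

/-- The code of `a ^ 3` in terms of the code of `a`. -/
def cubeCode (n : ℕ) : ℕ := entry cubeTable n

theorem cubeCode_toCode : ∀ a, cubeCode (toCode a) = toCode (a ^ 3) := by decide +kernel

/-- The packed table whose entry at `128 * m + s` is the smaller code in a pair of interior elements
with sum `m` and sum of cubes `s`, or `0` if there is none. There is at most one such pair, so the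
summands do not overlap. -/
def pairTable : ℕ :=
  (interior.map fun z => (interior.map fun w =>
    if z < w then z <<< (7 * (128 * (z ^^^ w) + (cubeCode z ^^^ cubeCode w))) else 0).sum).sum

/-- The codes of those interior `z` for which there is an interior `w` with `z + w = m` and
`z ^ 3 + w ^ 3 = s`. -/
def roots (m s : ℕ) : List ℕ :=
  let z := entry pairTable (128 * m + s)
  if z = 0 then [] else [z, z ^^^ m]

/-- The search for an array with rows `0 a₁ a₂`, `1 b₁ b₂`, `c₀ c₁ c₂`, `d₀ d₁ d₂` as in
`IsCubeBalanced` and with ratio `r`, in terms of codes. For given `a₁` and `c₀` the balance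
conditions prescribe the sums and the sums of cubes of the pairs `a₂, b₂`, then `c₁, c₂`, then
`d₀, d₁`. They determine `d₂`, leaving one condition on its cube; the value is `true` if that
condition always fails. -/
def excludesRatio (r : ℕ) : Bool :=
  interior.all fun a₁ =>
    let b₁ := a₁ ^^^ r
    (roots (1 ^^^ r) (1 ^^^ (cubeCode a₁ ^^^ cubeCode b₁))).all fun a₂ =>
      let b₂ := 1 ^^^ r ^^^ a₂
      interior.all fun c₀ =>
        let m := a₁ ^^^ a₂ ^^^ c₀
        (roots m (cubeCode a₁ ^^^ cubeCode a₂ ^^^ cubeCode c₀)).all fun c₁ =>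
          let c₂ := m ^^^ c₁
          (roots (1 ^^^ r ^^^ c₀ ^^^ c₁)
            (cubeCode b₂ ^^^ cubeCode a₂ ^^^ cubeCode c₀ ^^^ cubeCode c₁)).all fun d₀ =>
              let d₂ := 1 ^^^ c₀ ^^^ d₀ ^^^ (1 ^^^ r ^^^ c₂)
              cubeCode d₂ ^^^ (cubeCode b₂ ^^^ cubeCode a₂ ^^^ cubeCode c₂) ≠
                1 ^^^ cubeCode c₀ ^^^ cubeCode d₀

theorem interior_roots : ∀ z ∈ interior, ∀ w ∈ interior, z ≠ w →
    z ∈ roots (z ^^^ w) (cubeCode z ^^^ cubeCode w) := by decide +kernel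

theorem excludesRatio_eq_true : ∀ r ∈ [2, 12, 24], excludesRatio r := by decide +kernel

theorem mem_roots {z w m s : GF128} (hz : toCode z ∈ interior) (hw : toCode w ∈ interior)
    (hne : z ≠ w) (hm : w + z = m) (hs : w ^ 3 + z ^ 3 = s) :
    toCode z ∈ roots (toCode m) (toCode s) := by
  rw [← hm, ← hs, add_comm, add_comm (w ^ 3)]
  simpa only [toCode_add, cubeCode_toCode] using
    interior_roots _ hz _ hw (BitVec.toNat_inj.not.2 hne)

theorem ne_of_excludesRatio {r a₁ a₂ b₁ b₂ c₀ c₁ c₂ d₀ d₂ : GF128} (hr : excludesRatio (toCode r))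
    (hb₁ : b₁ = a₁ + r) (hb₂ : b₂ = 1 + r + a₂) (hc₂ : c₂ = a₁ + a₂ + c₀ + c₁)
    (hd₂ : d₂ = 1 + c₀ + d₀ + (1 + r + c₂))
    (ha₁ : toCode a₁ ∈ interior) (hc₀ : toCode c₀ ∈ interior)
    (ha₂ : toCode a₂ ∈ roots (toCode (1 + r)) (toCode (1 + (a₁ ^ 3 + b₁ ^ 3))))
    (hc₁ : toCode c₁ ∈ roots (toCode (a₁ + a₂ + c₀)) (toCode (a₁ ^ 3 + a₂ ^ 3 + c₀ ^ 3)))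
    (hd₀ : toCode d₀ ∈ roots (toCode (1 + r + c₀ + c₁))
      (toCode (b₂ ^ 3 + a₂ ^ 3 + c₀ ^ 3 + c₁ ^ 3))) :
    d₂ ^ 3 + (b₂ ^ 3 + a₂ ^ 3 + c₂ ^ 3) ≠ 1 + c₀ ^ 3 + d₀ ^ 3 := by
  subst hb₁ hb₂ hc₂ hd₂
  simp only [excludesRatio, List.all_eq_true, decide_eq_true_eq] at hr
  simp only [toCode_add, ← cubeCode_toCode, toCode_one] at ha₂ hc₁ hd₀
  intro h
  refine hr _ ha₁ _ ha₂ _ hc₀ _ hc₁ _ hd₀ ?_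
  simpa only [toCode_add, ← cubeCode_toCode, toCode_one] using congrArg toCode h

theorem not_hasRatio_of_excludesRatio {r : GF128} (hr : excludesRatio (toCode r)) :
    ¬ HasRatio r := by
  intro h
  obtain ⟨P, hP, a₀, b₀, b₁⟩ := h.exists_normalized
  obtain ⟨b₂, c₂, d₁, d₂⟩ := hP.balanced.pair_sums
  obtain ⟨b₂_cube, c₂_cube, d₁_cube, d₂_cube⟩ := hP.balanced_cube.pair_sums
  simp only [a₀, b₀, b₁, zero_add, CharTwo.add_cancel_left] at b₂ c₂
  simp only [a₀, b₀, b₂, zero_add] at d₁ d₂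
  simp only [a₀, b₀, one_pow, zero_add, ne_eq, OfNat.ofNat_ne_zero, not_false_eq_true, zero_pow]
    at b₂_cube c₂_cube d₂_cube
  have ne {i j i' j'} (h : (i, j) ≠ (i', j')) : P i j ≠ P i' j' :=
    fun h' => h (Prod.ext_iff.2 (hP.injective h'))
  have mem_interior {i j} (h₀ : (i, j) ≠ (0, 0)) (h₁ : (i, j) ≠ (1, 0)) :
      toCode (P i j) ∈ interior :=
    toCode_mem_interior _ (a₀ ▸ ne h₀) (b₀ ▸ ne h₁)
  have mem_roots {i j i' j' m s} (hm : P i' j' + P i j = m) (hs : P i' j' ^ 3 + P i j ^ 3 = s)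
      (hne : (i, j) ≠ (i', j') := by decide)
      (h₀ : (i, j) ≠ (0, 0) := by decide) (h₁ : (i, j) ≠ (1, 0) := by decide)
      (h₀' : (i', j') ≠ (0, 0) := by decide) (h₁' : (i', j') ≠ (1, 0) := by decide) :
      toCode (P i j) ∈ roots (toCode m) (toCode s) :=
    mem_roots (mem_interior h₀ h₁) (mem_interior h₀' h₁') (ne hne) hm hs
  exact ne_of_excludesRatio hr b₁ (CharTwo.add_eq_iff_eq_add.1 b₂) (CharTwo.add_eq_iff_eq_add.1 c₂)
    (CharTwo.add_eq_iff_eq_add.1 d₂) (mem_interior (by decide) (by decide))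
    (mem_interior (by decide) (by decide)) (mem_roots b₂ b₂_cube) (mem_roots c₂ c₂_cube)
    (mem_roots d₁ d₁_cube) d₂_cube

theorem not_hasRatio_ofCode (n : ℕ) (hn : n ∈ [2, 12, 24]) : ¬ HasRatio (ofCode n) := by
  have toCode_ofCode : toCode (ofCode n) = n := by decide +revert
  exact not_hasRatio_of_excludesRatio (by rw [toCode_ofCode, excludesRatio_eq_true n hn])

theorem exists_representative : ∀ t : GF128, t ≠ 0 → t ≠ 1 →
    ∃ s ∈ [t, 1 + t, t⁻¹, 1 + t⁻¹, (1 + t)⁻¹, 1 + (1 + t)⁻¹],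
      ∃ n ∈ [2, 12, 24], ∃ j < 7, s = ofCode n ^ 2 ^ j := by
  decide +kernel

theorem not_hasRatio (t : GF128) : ¬ HasRatio t := by
  intro h
  obtain ⟨s, hs, n, hn, j, -, hsn⟩ := exists_representative t h.ne_zero h.ne_one
  have hasRatio_s : HasRatio s := by
    simp only [List.mem_cons, List.not_mem_nil, or_false] at hs
    have hinv := h.inv h.ne_zero
    have hinv_one_add := h.one_add.inv h.one_add.ne_zero
    rcases hs with rfl | rfl | rfl | rfl | rfl | rfl
    exacts [h, h.one_add, hinv, hinv.one_add, hinv_one_add, hinv_one_add.one_add]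
  have frobenius_ofCode : iterateFrobeniusEquiv GF128 2 j (ofCode n) = s := by
    rw [iterateFrobeniusEquiv_def, hsn]
  refine not_hasRatio_ofCode n hn ?_
  rw [(iterateFrobeniusEquiv GF128 2 j).eq_symm_apply.2 frobenius_ofCode]
  exact hasRatio_s.map (iterateFrobeniusEquiv GF128 2 j).symm.toRingHom

theorem ncard_cube_eq_le (L : GF128 →+ GF128) (c : GF128) :
    {x | x ^ 3 = L x + c}.ncard ≤ 11 := by
  let := ZMod.algebra GF128 2
  have finrank_eq : finrank (ZMod 2) GF128 = 7 := card_eq_two_pow_iff_finrank_eq.1 card_eq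
  by_contra! hcard
  obtain ⟨P, hP⟩ := exists_isCubeBalanced finrank_eq hcard
  exact not_hasRatio _ hP.hasRatio

/-- A linearized polynomial which, up to a constant, agrees with the cube in eleven points. It was
found by a computer search. -/
def witness : GF128 →+ GF128 :=
  AddMonoidHom.mk' (fun x => x ^ 4 + ofCode 123 * x ^ 16 + ofCode 34 * x ^ 32 + ofCode 62 * x ^ 64)
    fun x y => by
      have add_pow (k : ℕ) : (x + y) ^ 2 ^ k = x ^ 2 ^ k + y ^ 2 ^ k := add_pow_char_pow ..
      linear_combination add_pow 2 + ofCode 123 * add_pow 4 + ofCode 34 * add_pow 5 +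
        ofCode 62 * add_pow 6

theorem cube_eq_witness :
    ∀ n ∈ [7, 10, 48, 62, 69, 70, 82, 93, 110, 112, 116],
      ofCode n ^ 3 = witness (ofCode n) + ofCode 12 := by
  decide +kernel

theorem eleven_le_ncard_cube_eq_witness : 11 ≤ {x | x ^ 3 = witness x + ofCode 12}.ncard := by
  let s := ([7, 10, 48, 62, 69, 70, 82, 93, 110, 112, 116].map ofCode).toFinset
  have card_s : s.card = 11 := by decide
  rw [← card_s, ← Set.ncard_coe_finset]
  refine Set.ncard_le_ncard (fun x hx => ?_)
  obtain ⟨n, hn, rfl⟩ := List.mem_map.1 (List.mem_toFinset.1 hx)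
  exact cube_eq_witness n hn

end GF128

/-! ### The distance to affine maps -/

section Card128

variable {F : Type*} [Field F]

theorem nonempty_ringEquiv_gf128 (hF : Nat.card F = 128) : Nonempty (F ≃+* GF128) := by
  have : Finite F := Nat.finite_of_card_ne_zero (by lia)
  have := Fintype.ofFinite F
  exact ⟨FiniteField.ringEquivOfCardEq (by rw [GF128.card_eq, ← Nat.card_eq_fintype_card, hF])⟩

theorem ncard_cube_eq_le (hF : Nat.card F = 128) (L : F →+ F) (c : F) :
    {x | x ^ 3 = L x + c}.ncard ≤ 11 := by
  obtain ⟨e⟩ := nonempty_ringEquiv_gf128 hF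
  rw [← ncard_setOf_pow_eq_conj e]
  exact GF128.ncard_cube_eq_le _ _

theorem exists_ncard_cube_eq (hF : Nat.card F = 128) :
    ∃ (L : F →+ F) (c : F), {x | x ^ 3 = L x + c}.ncard = 11 := by
  obtain ⟨e⟩ := nonempty_ringEquiv_gf128 hF
  have ncard_conj := ncard_setOf_pow_eq_conj e.symm GF128.witness (GF128.ofCode 12) 3
  exact ⟨_, _, (ncard_cube_eq_le hF _ _).antisymm
    (GF128.eleven_le_ncard_cube_eq_witness.trans_eq ncard_conj.symm)⟩

end Card128

section Distance

variable {V W : Type*} [AddCommGroup V] [AddCommGroup W] [Module (ZMod 2) V] [Module (ZMod 2) W]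

theorem dA_eq {f : V → W} {d : ℕ}
    (le_ncard : ∀ (L : V →ₗ[ZMod 2] W) (c : W), d ≤ {x | f x ≠ L x + c}.ncard)
    (attained : ∃ (L : V →ₗ[ZMod 2] W) (c : W), {x | f x ≠ L x + c}.ncard = d) : dA f = d := by
  obtain ⟨L, c, h⟩ := attained
  refine IsLeast.csInf_eq ⟨⟨L, c, h.symm⟩, ?_⟩
  rintro _ ⟨L, c, rfl⟩
  exact le_ncard L c

theorem ncard_setOf_ne {α β : Type*} [Finite α] (f g : α → β) :
    {x | f x ≠ g x}.ncard = Nat.card α - {x | f x = g x}.ncard := by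
  rw [← Set.ncard_compl]
  rfl

end Distance

end GoldCube

open GoldCube in
theorem gold_cube_dim7_dist_to_affine_general {F : Type*} [Field F] [Module (ZMod 2) F]
    (hF : Nat.card F = 128) (f : F → F) (hf : ∀ x, f x = x ^ 3) :
    dA f = 117 ∧
      (∀ (L : F →ₗ[ZMod 2] F) (c : F), 117 ≤ {x : F | f x ≠ L x + c}.ncard) ∧
      (∃ (L : F →ₗ[ZMod 2] F) (c : F), {x : F | f x ≠ L x + c}.ncard = 117) := by
  have : Finite F := Nat.finite_of_card_ne_zero (by lia)
  have ncard_eq (L : F →ₗ[ZMod 2] F) (c) :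
      {x | f x ≠ L x + c}.ncard = 128 - {x | x ^ 3 = L x + c}.ncard := by
    simp only [ncard_setOf_ne, hF, hf]
  have le_ncard (L : F →ₗ[ZMod 2] F) (c) : 117 ≤ {x | f x ≠ L x + c}.ncard := by
    rw [ncard_eq]
    exact Nat.sub_le_sub_left (ncard_cube_eq_le hF L c) 128
  have attained : ∃ (L : F →ₗ[ZMod 2] F) (c : F), {x | f x ≠ L x + c}.ncard = 117 := by
    obtain ⟨L, c, h⟩ := exists_ncard_cube_eq hF
    exact ⟨L.toZModLinearMap 2, c, (ncard_eq _ c).trans (congrArg (128 - ·) h)⟩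
  exact ⟨dA_eq le_ncard attained, le_ncard, attained⟩

theorem gold_cube_dim7_dist_to_affine
    (f : GaloisField 2 7 → GaloisField 2 7) (hf : ∀ x, f x = x ^ 3) :
    dA f = 117 ∧
      (∀ (L : GaloisField 2 7 →ₗ[ZMod 2] GaloisField 2 7) (c : GaloisField 2 7),
          117 ≤ {x : GaloisField 2 7 | f x ≠ L x + c}.ncard) ∧
      (∃ (L : GaloisField 2 7 →ₗ[ZMod 2] GaloisField 2 7) (c : GaloisField 2 7),
          {x : GaloisField 2 7 | f x ≠ L x + c}.ncard = 117) :=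
  gold_cube_dim7_dist_to_affine_general (GaloisField.card 2 7 (by lia)) f hf
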